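/- The series ∑_{d odd} μ²(d)/(d·√(e₂(d))) converges, where the sum ranges over odd positive integers d, μ is the Möbius function, and e₂(d) denotes the multiplicative order of 2 modulo d. Equivalently, the sum of 1/(d·√(ord_d(2))) over odd squarefree d ≥ 1 is finite. -/

import Mathlib

open ArithmeticFunction

/-!
If `a` has order at most `N` modulo `d`, then `d` divides `P = ∏_{1 ≤ k ≤ N} (a ^ k - 1)`, which is
at most `a ^ N ^ 2` and so has only `O(N ^ 2)` prime factors. Hence the reciprocals of all such
squarefree `d` sum to at most `∏_{p ∣ P} (1 + 1 / p) ≤ exp (∑_{p ∣ P} 1 / p)`.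

The reciprocals of any `2 ^ K` primes sum to at most `4 log K + O(1)`: those of size at least
`2 ^ K` contribute at most `1` in total, and those in `[2 ^ k, 2 ^ (k + 1))` at most `4 / k`, by
Chebyshev's bound `∏_{p ≤ n} p ≤ 4 ^ n`. With `N = 2 ^ M`, the `d` for which `a` has order at most
`2 ^ M` thus have reciprocal sum `O(M ^ 4)`, which is negligible against any power of `2 ^ M`, and
splitting the series dyadically by the order gives convergence.
-/

lemma sum_inv_le_card_div {S : Finset ℕ} {x : ℕ} (hx : 0 < x) (hS : ∀ n ∈ S, x ≤ n) :
    ∑ n ∈ S, (n : ℝ)⁻¹ ≤ S.card / x := by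
  rw [div_eq_mul_inv, ← nsmul_eq_mul]
  refine Finset.sum_le_card_nsmul _ _ _ fun n hn => ?_
  have hxn := hS n hn
  gcongr

lemma pow_card_le_four_pow_of_primes {S : Finset ℕ} {x n : ℕ}
    (hS : ∀ p ∈ S, p.Prime ∧ x ≤ p ∧ p ≤ n) : x ^ S.card ≤ 4 ^ n :=
  calc x ^ S.card ≤ ∏ p ∈ S, p := Finset.pow_card_le_prod S _ x fun p hp => (hS p hp).2.1
    _ ≤ primorial n := by
      rw [primorial_eq_prod_primesLE]
      exact Finset.prod_le_prod_of_subset_of_one_le'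
        (fun p hp => Nat.mem_primesLE.2 ⟨(hS p hp).2.2, (hS p hp).1⟩)
        fun p hp _ => (Nat.prime_of_mem_primesLE hp).one_le
    _ ≤ 4 ^ n := primorial_le_four_pow n

lemma mul_card_primes_log_eq_le {S : Finset ℕ} {k : ℕ}
    (hS : ∀ p ∈ S, p.Prime ∧ Nat.log 2 p = k) : k * S.card ≤ 4 * 2 ^ k := by
  have hpow : (2 ^ k) ^ S.card ≤ 4 ^ 2 ^ (k + 1) := by
    refine pow_card_le_four_pow_of_primes fun p hp => ?_
    obtain ⟨hprime, rfl⟩ := hS p hp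
    exact ⟨hprime, Nat.pow_log_le_self 2 hprime.ne_zero,
      (Nat.lt_pow_succ_log_self one_lt_two p).le⟩
  rw [show 4 = 2 ^ 2 by rfl, ← pow_mul, ← pow_mul, Nat.pow_le_pow_iff_right one_lt_two] at hpow
  linarith [pow_succ 2 k]

lemma sum_inv_primes_log_eq_le {S : Finset ℕ} {k : ℕ} (hk : 0 < k)
    (hS : ∀ p ∈ S, p.Prime ∧ Nat.log 2 p = k) : ∑ p ∈ S, (p : ℝ)⁻¹ ≤ 4 / k := by
  have hle : ∀ p ∈ S, 2 ^ k ≤ p := fun p hp =>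
    (hS p hp).2 ▸ Nat.pow_log_le_self 2 (hS p hp).1.ne_zero
  refine (sum_inv_le_card_div (by positivity) hle).trans ?_
  rw [div_le_div_iff₀ (by positivity) (by positivity), mul_comm]
  exact_mod_cast mul_card_primes_log_eq_le hS

lemma sum_inv_primes_lt_two_pow_le {S : Finset ℕ} {K : ℕ}
    (hS : ∀ p ∈ S, p.Prime ∧ p < 2 ^ K) : ∑ p ∈ S, (p : ℝ)⁻¹ ≤ 4 * (1 + Real.log K) := by
  have hlog : ∀ p ∈ S, Nat.log 2 p ∈ Finset.Icc 1 K := fun p hp =>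
    have ⟨hprime, hlt⟩ := hS p hp
    Finset.mem_Icc.2
      ⟨Nat.log_pos one_lt_two hprime.two_le, (Nat.log_lt_of_lt_pow hprime.ne_zero hlt).le⟩
  calc ∑ p ∈ S, (p : ℝ)⁻¹
      = ∑ k ∈ Finset.Icc 1 K, ∑ p ∈ S with Nat.log 2 p = k, (p : ℝ)⁻¹ :=
        (Finset.sum_fiberwise_of_maps_to hlog _).symm
    _ ≤ ∑ k ∈ Finset.Icc 1 K, (4 / k : ℝ) := by
        refine Finset.sum_le_sum fun k hk =>
          sum_inv_primes_log_eq_le (Finset.mem_Icc.1 hk).1 fun p hp => ?_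
        rw [Finset.mem_filter] at hp
        exact ⟨(hS p hp.1).1, hp.2⟩
    _ = 4 * (harmonic K : ℝ) := by
        simp only [harmonic_eq_sum_Icc, Rat.cast_sum, Rat.cast_inv, Rat.cast_natCast,
          Finset.mul_sum, div_eq_mul_inv]
    _ ≤ 4 * (1 + Real.log K) := by gcongr; exact harmonic_le_one_add_log K

lemma sum_inv_primes_le_of_card_le_two_pow {S : Finset ℕ} {K : ℕ} (hS : ∀ p ∈ S, p.Prime)
    (hcard : S.card ≤ 2 ^ K) : ∑ p ∈ S, (p : ℝ)⁻¹ ≤ 5 + 4 * Real.log K := by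
  have hsmall : ∑ p ∈ S with p < 2 ^ K, (p : ℝ)⁻¹ ≤ 4 * (1 + Real.log K) :=
    sum_inv_primes_lt_two_pow_le fun p hp =>
      have ⟨hpS, hlt⟩ := Finset.mem_filter.1 hp
      ⟨hS p hpS, hlt⟩
  have hlarge : ∑ p ∈ S with ¬p < 2 ^ K, (p : ℝ)⁻¹ ≤ 1 := by
    refine (sum_inv_le_card_div (x := 2 ^ K) (by positivity)
      fun p hp => not_lt.1 (Finset.mem_filter.1 hp).2).trans ?_
    rw [div_le_one (by positivity)]
    exact_mod_cast (Finset.card_filter_le _ _).trans hcard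
  linarith [Finset.sum_filter_add_sum_filter_not S (· < 2 ^ K) fun p => (p : ℝ)⁻¹]

lemma sum_squarefree_divisors_inv_eq_prod {F : Type*} [Semifield F] {n : ℕ} (hn : n ≠ 0) :
    ∑ d ∈ n.divisors with Squarefree d, (d : F)⁻¹ = ∏ p ∈ n.primeFactors, (1 + (p : F)⁻¹) := by
  have hfactors : (UniqueFactorizationMonoid.normalizedFactors n).toFinset = n.primeFactors := by
    rw [Nat.factors_eq, ← Nat.toFinset_factors, List.toFinset_coe]
  simp only [Nat.sum_divisors_filter_squarefree hn, hfactors, Finset.prod_one_add,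
    Finset.prod_val, Nat.cast_prod, Finset.prod_inv_distrib, id]

lemma two_pow_card_primeFactors_le {n : ℕ} (hn : n ≠ 0) : 2 ^ n.primeFactors.card ≤ n :=
  calc 2 ^ n.primeFactors.card ≤ ∏ p ∈ n.primeFactors, p :=
        Finset.pow_card_le_prod _ _ 2 fun _ hp => (Nat.prime_of_mem_primeFactors hp).two_le
    _ ≤ n := Nat.le_of_dvd hn.bot_lt (Nat.prod_primeFactors_dvd n)

lemma sum_squarefree_divisors_inv_le {n K : ℕ} (hn : n ≠ 0) (hK : 0 < K) (hnK : n ≤ 2 ^ 2 ^ K) :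
    ∑ d ∈ n.divisors with Squarefree d, (d : ℝ)⁻¹ ≤ Real.exp 5 * K ^ 4 := by
  have hcard : n.primeFactors.card ≤ 2 ^ K :=
    (Nat.pow_le_pow_iff_right one_lt_two).1 ((two_pow_card_primeFactors_le hn).trans hnK)
  calc ∑ d ∈ n.divisors with Squarefree d, (d : ℝ)⁻¹
      = ∏ p ∈ n.primeFactors, (1 + (p : ℝ)⁻¹) := sum_squarefree_divisors_inv_eq_prod hn
    _ ≤ Real.exp (∑ p ∈ n.primeFactors, (p : ℝ)⁻¹) :=
        Real.prod_one_add_le_exp_sum _ fun p => by positivity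
    _ ≤ Real.exp (5 + 4 * Real.log K) :=
        Real.exp_le_exp.2 <| sum_inv_primes_le_of_card_le_two_pow
          (fun _ => Nat.prime_of_mem_primeFactors) hcard
    _ = Real.exp 5 * K ^ 4 := by
        rw [Real.exp_add, show 4 * Real.log K = Real.log ((K : ℝ) ^ 4) by simp,
          Real.exp_log (by positivity)]

lemma dvd_pow_orderOf_sub_one {a : ℕ} (ha : 0 < a) (d : ℕ) :
    d ∣ a ^ orderOf (a : ZMod d) - 1 := by
  rw [← ZMod.natCast_eq_zero_iff, Nat.cast_sub (Nat.one_le_pow _ _ ha), Nat.cast_pow,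
    pow_orderOf_eq_one, Nat.cast_one, sub_self]

lemma orderOf_natCast_zmod_pos {a d : ℕ} (hd : d ≠ 0) (had : a.Coprime d) :
    0 < orderOf (a : ZMod d) :=
  have : NeZero d := ⟨hd⟩
  (isOfFinOrder_iff_isUnit.2 ((ZMod.isUnit_iff_coprime a d).2 had)).orderOf_pos

/-- The product of `a ^ k - 1` over `1 ≤ k ≤ N`: a small common multiple of all `d` modulo which
`a` has order at most `N`. -/
def prodPowSubOne (a N : ℕ) : ℕ := ∏ k ∈ Finset.Icc 1 N, (a ^ k - 1)

lemma prodPowSubOne_ne_zero {a : ℕ} (ha : 2 ≤ a) (N : ℕ) : prodPowSubOne a N ≠ 0 :=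
  Finset.prod_ne_zero_iff.2 fun k hk => by
    have hpow := Nat.one_lt_pow (Nat.one_le_iff_ne_zero.1 (Finset.mem_Icc.1 hk).1) ha
    omega

lemma prodPowSubOne_le {a : ℕ} (ha : 0 < a) (N : ℕ) : prodPowSubOne a N ≤ a ^ N ^ 2 :=
  calc prodPowSubOne a N ≤ (a ^ N) ^ (Finset.Icc 1 N).card :=
        Finset.prod_le_pow_card _ _ _ fun k hk =>
          (Nat.sub_le _ _).trans (Nat.pow_le_pow_right ha (Finset.mem_Icc.1 hk).2)
    _ = a ^ N ^ 2 := by rw [Nat.card_Icc, Nat.add_sub_cancel, ← pow_mul, sq]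

lemma dvd_prodPowSubOne {a d N : ℕ} (ha : 0 < a) (hd : d ≠ 0) (had : a.Coprime d)
    (hN : orderOf (a : ZMod d) ≤ N) : d ∣ prodPowSubOne a N :=
  (dvd_pow_orderOf_sub_one ha d).trans <|
    Finset.dvd_prod_of_mem _ (Finset.mem_Icc.2 ⟨orderOf_natCast_zmod_pos hd had, hN⟩)

lemma sum_inv_le_of_orderOf_le_two_pow {a : ℕ} (ha : 2 ≤ a) (M : ℕ) {T : Finset ℕ}
    (hT : ∀ d ∈ T, a.Coprime d ∧ Squarefree d ∧ orderOf (a : ZMod d) ≤ 2 ^ M) :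
    ∑ d ∈ T, (d : ℝ)⁻¹ ≤ Real.exp 5 * (a + 2 * M) ^ 4 := by
  have ha0 : 0 < a := by omega
  have hP0 := prodPowSubOne_ne_zero ha (2 ^ M)
  have hP : prodPowSubOne a (2 ^ M) ≤ 2 ^ 2 ^ (a + 2 * M) :=
    calc prodPowSubOne a (2 ^ M) ≤ a ^ (2 ^ M) ^ 2 := prodPowSubOne_le ha0 _
      _ ≤ (2 ^ 2 ^ a) ^ (2 ^ M) ^ 2 := by
        gcongr
        exact (Nat.lt_two_pow_self.trans Nat.lt_two_pow_self).le
      _ = 2 ^ 2 ^ (a + 2 * M) := by ring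
  calc ∑ d ∈ T, (d : ℝ)⁻¹
      ≤ ∑ d ∈ (prodPowSubOne a (2 ^ M)).divisors with Squarefree d, (d : ℝ)⁻¹ := by
        refine Finset.sum_le_sum_of_subset_of_nonneg (fun d hd => ?_) fun _ _ _ => by positivity
        obtain ⟨had, hsq, hord⟩ := hT d hd
        exact Finset.mem_filter.2
          ⟨Nat.mem_divisors.2 ⟨dvd_prodPowSubOne ha0 hsq.ne_zero had hord, hP0⟩, hsq⟩
    _ ≤ Real.exp 5 * (a + 2 * M) ^ 4 := by
        exact_mod_cast sum_squarefree_divisors_inv_le hP0 (by omega) hP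

lemma div_rpow_le_div_pow_log {x s : ℝ} (hx : 0 ≤ x) (hs : 0 < s) (n : ℕ) :
    x / (n : ℝ) ^ s ≤ x / ((2 : ℝ) ^ s) ^ Nat.log 2 n := by
  rcases eq_or_ne n 0 with rfl | hn
  · simp [hs.ne', hx]
  · have hlog : (2 : ℝ) ^ Nat.log 2 n ≤ n := by exact_mod_cast Nat.pow_log_le_self 2 hn
    rw [Real.rpow_pow_comm zero_le_two]
    gcongr

lemma summable_div_rpow_of_dyadic_sum_le {ι : Type*} {f : ι → ℝ} {g : ι → ℕ} {B : ℕ → ℝ} {s : ℝ}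
    (hs : 0 < s) (hf : ∀ i, 0 ≤ f i)
    (hB : ∀ (M : ℕ) (T : Finset ι), (∀ i ∈ T, g i ≤ 2 ^ M) → ∑ i ∈ T, f i ≤ B M)
    (hsum : Summable fun j : ℕ => B (j + 1) / ((2 : ℝ) ^ s) ^ j) :
    Summable fun i => f i / (g i : ℝ) ^ s := by
  have hB0 (M : ℕ) : 0 ≤ B M := by simpa using hB M ∅
  refine summable_of_sum_le (c := ∑' j, B (j + 1) / ((2 : ℝ) ^ s) ^ j)
    (fun i => div_nonneg (hf i) (by positivity)) fun T => ?_
  have hlog : ∀ i ∈ T, Nat.log 2 (g i) ∈ T.image fun i => Nat.log 2 (g i) :=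
    fun _ => Finset.mem_image_of_mem _
  calc ∑ i ∈ T, f i / (g i : ℝ) ^ s
      ≤ ∑ i ∈ T, f i / ((2 : ℝ) ^ s) ^ Nat.log 2 (g i) :=
        Finset.sum_le_sum fun i _ => div_rpow_le_div_pow_log (hf i) hs (g i)
    _ = ∑ j ∈ T.image fun i => Nat.log 2 (g i),
          (∑ i ∈ T with Nat.log 2 (g i) = j, f i) / ((2 : ℝ) ^ s) ^ j := by
        rw [← Finset.sum_fiberwise_of_maps_to hlog]
        refine Finset.sum_congr rfl fun j _ => ?_
        rw [Finset.sum_div]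
        exact Finset.sum_congr rfl fun i hi => by rw [(Finset.mem_filter.1 hi).2]
    _ ≤ ∑ j ∈ T.image fun i => Nat.log 2 (g i), B (j + 1) / ((2 : ℝ) ^ s) ^ j := by
        refine Finset.sum_le_sum fun j _ => ?_
        gcongr
        refine hB _ _ fun i hi => ?_
        obtain ⟨-, rfl⟩ := Finset.mem_filter.1 hi
        exact (Nat.lt_pow_succ_log_self one_lt_two _).le
    _ ≤ ∑' j, B (j + 1) / ((2 : ℝ) ^ s) ^ j :=
        hsum.sum_le_tsum _ fun j _ => div_nonneg (hB0 _) (by positivity)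

lemma summable_add_mul_pow_div_pow (x y : ℝ) (k : ℕ) {r : ℝ} (hr : 1 < r) :
    Summable fun j : ℕ => (x + y * j) ^ k / r ^ j := by
  have hnorm : ‖r⁻¹‖ < 1 := by
    rw [norm_inv]
    exact inv_lt_one_of_one_lt₀ (hr.trans_le (Real.le_norm_self r))
  have hexpand (j : ℕ) : (x + y * j) ^ k / r ^ j =
      ∑ m ∈ Finset.range (k + 1),
        x ^ m * y ^ (k - m) * k.choose m * ((j : ℝ) ^ (k - m) * r⁻¹ ^ j) := by
    rw [add_pow, div_eq_mul_inv, ← inv_pow, Finset.sum_mul]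
    exact Finset.sum_congr rfl fun m _ => by rw [mul_pow]; ring
  simp only [hexpand]
  exact summable_sum fun m _ =>
    (summable_pow_mul_geometric_of_norm_lt_one (k - m) hnorm).mul_left _

theorem summable_moebius_sq_div_order_two_general {a : ℕ} (ha : 2 ≤ a) {s : ℝ} (hs : 0 < s) :
    Summable fun d : ℕ =>
      if a.Coprime d then (moebius d : ℝ) ^ 2 / (d * (orderOf (a : ZMod d) : ℝ) ^ s) else 0 := by
  have hterm (d : ℕ) :
      (if a.Coprime d then (moebius d : ℝ) ^ 2 / (d * (orderOf (a : ZMod d) : ℝ) ^ s) else 0) =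
        (if a.Coprime d ∧ Squarefree d then (d : ℝ)⁻¹ else 0) / (orderOf (a : ZMod d) : ℝ) ^ s := by
    have hmu : (moebius d : ℝ) ^ 2 = if Squarefree d then 1 else 0 := by
      exact_mod_cast moebius_sq (n := d)
    rw [hmu, ← div_div]
    split_ifs <;> simp_all
  simp only [hterm]
  refine summable_div_rpow_of_dyadic_sum_le (B := fun M => Real.exp 5 * (a + 2 * M) ^ 4) hs
    (fun d => by split_ifs <;> positivity) (fun M T hT => ?_) ?_
  · rw [← Finset.sum_filter]
    refine sum_inv_le_of_orderOf_le_two_pow ha M fun d hd => ?_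
    obtain ⟨hdT, had, hsq⟩ := Finset.mem_filter.1 hd
    exact ⟨had, hsq, hT d hdT⟩
  · have hpoly := summable_add_mul_pow_div_pow (a + 2) 2 4 (Real.one_lt_rpow one_lt_two hs)
    refine (hpoly.mul_left (Real.exp 5)).congr fun j => ?_
    push_cast
    ring

/-- The series `∑_{d odd} μ²(d) / (d·√(ord_d 2))` converges, where `ord_d 2` is the
multiplicative order of `2` modulo `d`. -/
theorem summable_moebius_sq_div_order_two :
    Summable (fun d : ℕ =>
      if Odd d then ((moebius d : ℝ)) ^ 2 / (d * Real.sqrt (orderOf (2 : ZMod d)))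
      else 0) := by
  simpa only [Nat.coprime_two_left, Real.sqrt_eq_rpow, Nat.cast_ofNat] using
    summable_moebius_sq_div_order_two_general le_rfl one_half_pos
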